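/- Let F: ℝ^n_+ → ℝ be bounded on ℝ^n_+ and completely monotone on the interior of ℝ^n_+ (i.e., (−1)^{|β|} ∂^β F ≥ 0 for all multi-indices β). Then there exists a unique finite nonnegative Borel measure μ on ℝ^n_+ with F(p) = ∫_{ℝ^n_+} e^{−p·x} dμ(x) for all p ∈ ℝ^n_+. -/

import Mathlib

open Real MeasureTheory

/-- Partial derivative in the `i`-th coordinate direction. -/
noncomputable def pderiv' (n : ℕ) (i : Fin n) (f : (Fin n → ℝ) → ℝ) :
    (Fin n → ℝ) → ℝ :=
  fun p => fderiv ℝ f p (Pi.single i 1)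

/-!
By repeated use of the mean value theorem, the sign conditions on the derivatives of `F` become sign
conditions on its iterated finite differences, and in this form they extend to the boundary of the
orthant. The functions on the closed orthant whose differences satisfy them and whose value at `0`
is `1` form a compact convex set. Such a function is a convex combination of the normalizations of a
translate and of a negated difference of itself, so the extreme ones are multiplicative, that is, of
the form `p ↦ ∏ i, t i ^ p i` with `t` in the unit cube. By the Krein–Milman theorem `F` is then an
integral of such functions against a finite measure on the cube. Continuity at `0` prevents this
measure from charging the faces `t i = 0`, and the substitution `t i = exp (-x i)` gives the Laplace
transform. Uniqueness follows from the Stone–Weierstrass theorem: the functions `x ↦ exp (-p · x)`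
are closed under multiplication and separate points.
-/

open Filter Set Topology
open scoped NNReal BoundedContinuousFunction fwdDiff

section IteratedDifference

variable {M N A B : Type*} [AddCommMonoid M] [AddCommMonoid N] [AddCommGroup A] [AddCommGroup B]

lemma foldr_fwdDiff_add (l : List M) (f g : M → A) :
    l.foldr fwdDiff (f + g) = l.foldr fwdDiff f + l.foldr fwdDiff g := by
  induction l with
  | nil => rfl
  | cons h l ih => simp only [List.foldr_cons, ih, fwdDiff_add]

lemma foldr_fwdDiff_comp_add (l : List M) (f : M → A) (h p : M) :
    l.foldr fwdDiff (fun q => f (q + h)) p = l.foldr fwdDiff f (p + h) := by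
  induction l generalizing p with
  | nil => rfl
  | cons k l ih => simp only [List.foldr_cons, fwdDiff, ih, add_right_comm]

lemma foldr_fwdDiff_comp_addMonoidHom (φ : N →+ M) (l : List N) (f : M → A) (p : N) :
    l.foldr fwdDiff (f ∘ φ) p = (l.map φ).foldr fwdDiff f (φ p) := by
  induction l generalizing p with
  | nil => rfl
  | cons h l ih => simp only [List.foldr_cons, List.map_cons, fwdDiff, ih, map_add]

lemma foldr_fwdDiff_addMonoidHom_comp (φ : A →+ B) (l : List M) (f : M → A) :
    l.foldr fwdDiff (φ ∘ f) = φ ∘ l.foldr fwdDiff f := by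
  induction l with
  | nil => rfl
  | cons h l ih => ext p; simp only [List.foldr_cons, fwdDiff, ih, Function.comp_apply, map_sub]

lemma foldr_fwdDiff_const_smul {R : Type*} [Monoid R] [DistribMulAction R A] (l : List M) (c : R)
    (f : M → A) : l.foldr fwdDiff (c • f) = c • l.foldr fwdDiff f :=
  foldr_fwdDiff_addMonoidHom_comp (DistribSMul.toAddMonoidHom A c) l f

lemma continuous_foldr_fwdDiff_apply [TopologicalSpace A] [IsTopologicalAddGroup A] (l : List M)
    (p : M) : Continuous fun f : M → A => l.foldr fwdDiff f p := by
  induction l generalizing p with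
  | nil => exact continuous_apply p
  | cons h l ih => exact (ih (p + h)).sub (ih p)

end IteratedDifference

/-- Complete monotonicity of a function on a commutative monoid, in terms of finite differences:
`(-1)ᵏ Δ_[h₁] ⋯ Δ_[hₖ] f ≥ 0` for all increments `h₁, …, hₖ`. -/
def IsCompletelyMonotone {M : Type*} [AddCommMonoid M] (f : M → ℝ) : Prop :=
  ∀ (l : List M) (p : M), 0 ≤ (-1) ^ l.length * l.foldr fwdDiff f p

namespace IsCompletelyMonotone

variable {M : Type*} [AddCommMonoid M] {f g : M → ℝ}

lemma nonneg (hf : IsCompletelyMonotone f) (p : M) : 0 ≤ f p := by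
  simpa using hf [] p

lemma apply_add_le (hf : IsCompletelyMonotone f) (p h : M) : f (p + h) ≤ f p := by
  simpa [fwdDiff] using hf [h] p

lemma le_apply_zero (hf : IsCompletelyMonotone f) (p : M) : f p ≤ f 0 := by
  simpa using hf.apply_add_le 0 p

lemma eq_zero_of_apply_zero (hf : IsCompletelyMonotone f) (h0 : f 0 = 0) : f = 0 :=
  funext fun p => le_antisymm ((hf.le_apply_zero p).trans_eq h0) (hf.nonneg p)

lemma add (hf : IsCompletelyMonotone f) (hg : IsCompletelyMonotone g) :
    IsCompletelyMonotone (f + g) := fun l p => by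
  rw [foldr_fwdDiff_add, Pi.add_apply, mul_add]
  exact add_nonneg (hf l p) (hg l p)

lemma const_smul (hf : IsCompletelyMonotone f) {c : ℝ} (hc : 0 ≤ c) :
    IsCompletelyMonotone (c • f) := fun l p => by
  rw [foldr_fwdDiff_const_smul, Pi.smul_apply, smul_eq_mul, mul_left_comm]
  exact mul_nonneg hc (hf l p)

lemma comp_add (hf : IsCompletelyMonotone f) (h : M) :
    IsCompletelyMonotone fun p => f (p + h) := fun l p => by
  rw [foldr_fwdDiff_comp_add]
  exact hf l (p + h)

lemma neg_fwdDiff (hf : IsCompletelyMonotone f) (h : M) :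
    IsCompletelyMonotone ((-1 : ℝ) • Δ_[h] f) := fun l p => by
  rw [foldr_fwdDiff_const_smul, Pi.smul_apply, smul_eq_mul, ← mul_assoc, ← pow_succ]
  simpa using hf (l ++ [h]) p

end IsCompletelyMonotone

lemma isClosed_setOf_isCompletelyMonotone {M : Type*} [AddCommMonoid M] :
    IsClosed {f : M → ℝ | IsCompletelyMonotone f} := by
  simp only [IsCompletelyMonotone, ofPred_forall]
  exact isClosed_iInter fun l => isClosed_iInter fun p =>
    isClosed_le continuous_const (continuous_const.mul (continuous_foldr_fwdDiff_apply l p))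

/-- The completely monotone functions with value `1` at `0`: a compact convex base of the cone of
completely monotone functions. -/
def completelyMonotoneBase (M : Type*) [AddCommMonoid M] : Set (M → ℝ) :=
  {f | IsCompletelyMonotone f ∧ f 0 = 1}

section Base

variable {M : Type*} [AddCommMonoid M]

lemma isCompact_completelyMonotoneBase : IsCompact (completelyMonotoneBase M) := by
  refine (isCompact_univ_pi fun _ => isCompact_Icc (a := (0 : ℝ)) (b := 1)).of_isClosed_subset
    (isClosed_setOf_isCompletelyMonotone.inter (isClosed_eq (continuous_apply 0) continuous_const))
    fun f hf p _ => ?_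
  exact ⟨hf.1.nonneg p, hf.2 ▸ hf.1.le_apply_zero p⟩

lemma convex_completelyMonotoneBase : Convex ℝ (completelyMonotoneBase M) :=
  fun f hf g hg a b ha hb hab =>
    ⟨(hf.1.const_smul ha).add (hg.1.const_smul hb), by simp [hf.2, hg.2, hab]⟩

lemma inv_smul_mem_completelyMonotoneBase {f : M → ℝ} (hf : IsCompletelyMonotone f)
    (h0 : f 0 ≠ 0) : (f 0)⁻¹ • f ∈ completelyMonotoneBase M :=
  ⟨hf.const_smul (inv_nonneg.2 (hf.nonneg 0)), inv_mul_cancel₀ h0⟩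

/-- The extreme point `f` is the convex combination of the normalizations of its translate
`f (· + h)` and of `-Δ_[h] f`, with weights `f h` and `1 - f h`. -/
lemma apply_add_eq_mul_of_mem_extremePoints {f : M → ℝ}
    (hf : f ∈ (completelyMonotoneBase M).extremePoints ℝ) (p h : M) :
    f (p + h) = f p * f h := by
  obtain ⟨⟨hcm, hone⟩, hext⟩ := mem_extremePoints_iff_left.1 hf
  let u : M → ℝ := fun q => f (q + h)
  let v : M → ℝ := (-1 : ℝ) • Δ_[h] f
  have hu : IsCompletelyMonotone u := hcm.comp_add h
  have hv : IsCompletelyMonotone v := hcm.neg_fwdDiff h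
  have hv_apply (q : M) : v q = f q - u q := by simp [v, u, fwdDiff]
  have hu0 : u 0 = f h := by simp [u]
  have hv0 : v 0 = 1 - f h := by rw [hv_apply, hone, hu0]
  by_cases hfh0 : f h = 0
  · have : u p = 0 := congrFun (hu.eq_zero_of_apply_zero (hu0.trans hfh0)) p
    rw [hfh0, mul_zero]
    exact this
  by_cases hfh1 : f h = 1
  · have : v p = 0 := congrFun (hv.eq_zero_of_apply_zero (by rw [hv0, hfh1, sub_self])) p
    rw [hfh1, mul_one]
    linarith [hv_apply p]
  have hu0' : u 0 ≠ 0 := by rwa [hu0]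
  have hv0' : v 0 ≠ 0 := by rwa [hv0, sub_ne_zero, ne_comm]
  have hseg : f ∈ openSegment ℝ ((u 0)⁻¹ • u) ((v 0)⁻¹ • v) := by
    refine ⟨u 0, v 0, (hu.nonneg 0).lt_of_ne' hu0', (hv.nonneg 0).lt_of_ne' hv0', ?_, ?_⟩
    · rw [hu0, hv0, add_sub_cancel]
    · rw [smul_inv_smul₀ hu0', smul_inv_smul₀ hv0']
      ext q
      rw [Pi.add_apply, hv_apply, add_sub_cancel]
  have hnorm : (u 0)⁻¹ • u = f := hext _ (inv_smul_mem_completelyMonotoneBase hu hu0') _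
    (inv_smul_mem_completelyMonotoneBase hv hv0') hseg
  calc f (p + h) = u 0 * ((u 0)⁻¹ • u) p := (mul_inv_cancel_left₀ hu0' _).symm
    _ = f p * f h := by rw [hnorm, hu0, mul_comm]

lemma exists_addChar_eq_of_mem_extremePoints {f : M → ℝ}
    (hf : f ∈ (completelyMonotoneBase M).extremePoints ℝ) : ∃ χ : AddChar M ℝ, ⇑χ = f :=
  ⟨{ toFun := f
     map_zero_eq_one' := hf.1.2
     map_add_eq_mul' := apply_add_eq_mul_of_mem_extremePoints hf }, rfl⟩

end Base

/-- The barycenters form a compact convex set containing `range Φ`. -/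
lemma exists_probabilityMeasure_of_mem_closure_convexHull {X κ : Type*} [TopologicalSpace X]
    [CompactSpace X] [T2Space X] [MeasurableSpace X] [BorelSpace X] {Φ : X → κ → ℝ}
    (hΦ : Continuous Φ) {f : κ → ℝ} (hf : f ∈ closure (convexHull ℝ (range Φ))) :
    ∃ μ : ProbabilityMeasure X, ∀ k, f k = ∫ x, Φ x k ∂μ := by
  have hΦk (k : κ) : Continuous fun x => Φ x k := (continuous_apply k).comp hΦ
  have hint (μ : ProbabilityMeasure X) (k : κ) : Integrable (fun x => Φ x k) μ :=
    BoundedContinuousFunction.integrable _ (.mkOfCompact ⟨_, hΦk k⟩)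
  let bary : ProbabilityMeasure X → κ → ℝ := fun μ k => ∫ x, Φ x k ∂μ
  have hbary : Continuous bary := continuous_pi fun k =>
    ProbabilityMeasure.continuous_integral_continuousMap (⟨_, hΦk k⟩ : C(X, ℝ))
  have hconvex : Convex ℝ (range bary) := by
    rintro _ ⟨μ, rfl⟩ _ ⟨ν, rfl⟩ a b ha hb hab
    let ρ : Measure X := ENNReal.ofReal a • (μ : Measure X) + ENNReal.ofReal b • (ν : Measure X)
    have hρ : IsProbabilityMeasure ρ := ⟨by simp [ρ, ← ENNReal.ofReal_add ha hb, hab]⟩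
    refine ⟨⟨ρ, hρ⟩, ?_⟩
    ext k
    change ∫ x, Φ x k ∂ρ = a • ∫ x, Φ x k ∂μ + b • ∫ x, Φ x k ∂ν
    rw [integral_add_measure ((hint μ k).smul_measure ENNReal.ofReal_ne_top)
      ((hint ν k).smul_measure ENNReal.ofReal_ne_top), integral_smul_measure,
      integral_smul_measure, ENNReal.toReal_ofReal ha, ENNReal.toReal_ofReal hb]
  have hrange : range Φ ⊆ range bary := by
    rintro _ ⟨x, rfl⟩
    exact ⟨diracProba x, funext fun k => integral_dirac' _ x (hΦk k).stronglyMeasurable⟩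
  obtain ⟨μ, hμ⟩ := closure_minimal (convexHull_min hrange hconvex)
    (isCompact_range hbary).isClosed hf
  exact ⟨μ, fun k => congrFun hμ.symm k⟩

lemma eq_one_of_forall_pow_mem_Icc {r c C : ℝ} (hc : 0 < c) (h : ∀ n : ℕ, r ^ n ∈ Icc c C) :
    r = 1 := by
  refine le_antisymm (not_lt.1 fun hr => ?_) (not_lt.1 fun hr => ?_)
  · obtain ⟨n, hn⟩ := pow_unbounded_of_one_lt C hr
    exact (h n).2.not_gt hn
  · obtain ⟨n, hn⟩ := exists_pow_lt_of_lt_one hc hr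
    exact (h n).1.not_gt hn

section AddChar

lemma addChar_apply_eq_prod_single {ι M R : Type*} [Fintype ι] [DecidableEq ι] [AddCommMonoid M]
    [CommMonoid R] (χ : AddChar (ι → M) R) (p : ι → M) : χ p = ∏ i, χ (Pi.single i (p i)) := by
  conv_lhs => rw [← Finset.univ_sum_single p]
  exact map_prod χ.toMonoidHom (fun i => Multiplicative.ofAdd (Pi.single i (p i))) Finset.univ

lemma addChar_nnreal_nonneg (χ : AddChar ℝ≥0 ℝ) (s : ℝ≥0) : 0 ≤ χ s := by
  rw [← add_halves s, χ.map_add_eq_mul]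
  exact mul_self_nonneg _

lemma addChar_nnreal_apply_natCast_mul (χ : AddChar ℝ≥0 ℝ) (n : ℕ) (s : ℝ≥0) :
    χ (n * s) = χ s ^ n := by
  simpa using χ.map_nsmul_eq_pow n s

lemma addChar_nnreal_pow_mem_Icc (χ : AddChar ℝ≥0 ℝ) (hχ : Antitone χ) (h1 : 0 < χ 1)
    (s : ℝ≥0) (n : ℕ) :
    χ s ^ n ∈ Icc (χ 1 ^ (n * s + 1 : ℝ)) (χ 1 ^ (n * s - 1 : ℝ)) := by
  have h1' : χ 1 ≤ 1 := by simpa using hχ zero_le_one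
  have hfloor (m : ℕ) : χ m = χ 1 ^ (m : ℝ) := by
    simpa using addChar_nnreal_apply_natCast_mul χ m 1
  rw [← addChar_nnreal_apply_natCast_mul]
  constructor
  · calc χ 1 ^ (n * s + 1 : ℝ) ≤ χ 1 ^ ((⌊n * s⌋₊ + 1 : ℕ) : ℝ) := by
          refine rpow_le_rpow_of_exponent_ge h1 h1' ?_
          push_cast
          gcongr
          exact_mod_cast Nat.floor_le (zero_le (a := n * s))
      _ = χ (⌊n * s⌋₊ + 1 : ℕ) := (hfloor _).symm
      _ ≤ χ (n * s) := hχ (by exact_mod_cast (Nat.lt_floor_add_one (n * s)).le)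
  · calc χ (n * s) ≤ χ ⌊n * s⌋₊ := hχ (Nat.floor_le zero_le)
      _ = χ 1 ^ (⌊n * s⌋₊ : ℝ) := hfloor _
      _ ≤ χ 1 ^ (n * s - 1 : ℝ) := by
          refine rpow_le_rpow_of_exponent_ge h1 h1' (sub_le_iff_le_add.2 ?_)
          exact_mod_cast (Nat.lt_floor_add_one (n * s)).le

lemma addChar_nnreal_apply_eq_rpow (χ : AddChar ℝ≥0 ℝ) (hχ : Antitone χ) (s : ℝ≥0) :
    χ s = χ 1 ^ (s : ℝ) := by
  rcases (addChar_nnreal_nonneg χ 1).eq_or_lt' with h1 | h1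
  · rcases eq_or_ne s 0 with rfl | hs
    · simp
    obtain ⟨n, hn⟩ := exists_nat_ge s⁻¹
    have hns : χ (n * s) ≤ χ 1 := hχ ((inv_le_iff_one_le_mul₀ (pos_iff_ne_zero.2 hs)).1 hn)
    have hpow : χ s ^ n = 0 := by
      rw [← addChar_nnreal_apply_natCast_mul]
      exact le_antisymm (hns.trans_eq h1) (addChar_nnreal_nonneg χ _)
    rw [h1, zero_rpow (by exact_mod_cast hs), eq_zero_of_pow_eq_zero hpow]
  · have hratio : χ s / χ 1 ^ (s : ℝ) = 1 := by
      refine eq_one_of_forall_pow_mem_Icc (c := χ 1) (C := (χ 1)⁻¹) h1 fun n => ?_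
      have hpos : 0 < χ 1 ^ (n * s : ℝ) := rpow_pos_of_pos h1 _
      have h := addChar_nnreal_pow_mem_Icc χ hχ h1 s n
      rw [rpow_add h1, rpow_sub h1, rpow_one, div_eq_mul_inv] at h
      rw [div_pow, ← rpow_mul_natCast h1.le, mul_comm (s : ℝ)]
      exact ⟨(le_div_iff₀' hpos).2 h.1, (div_le_iff₀' hpos).2 h.2⟩
    rwa [div_eq_one_iff_eq (rpow_pos_of_pos h1 _).ne'] at hratio

end AddChar

section Faces

variable {ι : Type*}

lemma indicator_apply_eq_zero_le_one_sub_rpow {s : ℝ} (hs : 0 < s) (i : ι) (t : ι → unitInterval) :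
    {t : ι → unitInterval | t i = 0}.indicator 1 t ≤ 1 - (t i : ℝ) ^ s := by
  by_cases ht : t i = 0
  · simp [ht, zero_rpow hs.ne']
  · simpa [ht] using rpow_le_one (t i).2.1 (t i).2.2 hs.le

lemma measureReal_apply_eq_zero_le [Countable ι] (μ : Measure (ι → unitInterval))
    [IsFiniteMeasure μ] (i : ι) {s : ℝ} (hs : 0 < s) :
    μ.real {t | t i = 0} ≤ μ.real univ - ∫ t, (t i : ℝ) ^ s ∂μ := by
  have hmeas : MeasurableSet {t : ι → unitInterval | t i = 0} :=
    measurable_pi_apply i (measurableSet_singleton 0)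
  have hint : Integrable (fun t : ι → unitInterval => (t i : ℝ) ^ s) μ :=
    .of_bound (Measurable.aestronglyMeasurable (by fun_prop)) 1 <| ae_of_all _ fun t => by
      rw [norm_of_nonneg (rpow_nonneg (t i).2.1 s)]
      exact rpow_le_one (t i).2.1 (t i).2.2 hs.le
  calc μ.real {t | t i = 0} = ∫ t, {t | t i = 0}.indicator 1 t ∂μ :=
        (integral_indicator_one hmeas).symm
    _ ≤ ∫ t, (1 - (t i : ℝ) ^ s) ∂μ :=
        integral_mono ((integrable_const 1).indicator hmeas) ((integrable_const 1).sub hint)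
          (indicator_apply_eq_zero_le_one_sub_rpow hs i)
    _ = μ.real univ - ∫ t, (t i : ℝ) ^ s ∂μ := by
        rw [integral_sub (integrable_const 1) hint, integral_const, smul_eq_mul, mul_one]

end Faces

section Cube

variable {ι : Type*} [Fintype ι]

lemma exists_prod_rpow_eq_of_mem_extremePoints {f : (ι → ℝ≥0) → ℝ}
    (hf : f ∈ (completelyMonotoneBase (ι → ℝ≥0)).extremePoints ℝ) :
    ∃ t : ι → unitInterval, ∀ p, f p = ∏ i, (t i : ℝ) ^ (p i : ℝ) := by
  classical
  obtain ⟨χ, rfl⟩ := exists_addChar_eq_of_mem_extremePoints hf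
  have hcm : IsCompletelyMonotone χ := hf.1.1
  have hle_one (p : ι → ℝ≥0) : χ p ≤ 1 := hf.1.2 ▸ hcm.le_apply_zero p
  let χi (i : ι) : AddChar ℝ≥0 ℝ := χ.compAddMonoidHom (AddMonoidHom.single (fun _ => ℝ≥0) i)
  have hanti (i : ι) : Antitone (χi i) := fun s s' hs => by
    obtain ⟨r, rfl⟩ := exists_add_of_le hs
    simpa [χi, Pi.single_add] using hcm.apply_add_le (Pi.single i s) (Pi.single i r)
  refine ⟨fun i => ⟨χi i 1, hcm.nonneg _, hle_one _⟩, fun p => ?_⟩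
  calc χ p = ∏ i, χi i (p i) := addChar_apply_eq_prod_single χ p
    _ = ∏ i, χi i 1 ^ (p i : ℝ) :=
      Finset.prod_congr rfl fun i _ => addChar_nnreal_apply_eq_rpow _ (hanti i) _

lemma continuous_prod_rpow (p : ι → ℝ≥0) :
    Continuous fun t : ι → unitInterval => ∏ i, (t i : ℝ) ^ (p i : ℝ) :=
  continuous_finsetProd _ fun i _ =>
    (Real.continuous_rpow_const (p i).2).comp (by fun_prop)

lemma IsCompletelyMonotone.exists_measure_cube {f : (ι → ℝ≥0) → ℝ} (hf : IsCompletelyMonotone f) :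
    ∃ μ : Measure (ι → unitInterval), IsFiniteMeasure μ ∧
      ∀ p, f p = ∫ t, ∏ i, (t i : ℝ) ^ (p i : ℝ) ∂μ := by
  by_cases h0 : f 0 = 0
  · exact ⟨0, inferInstance, fun p => by simp [hf.eq_zero_of_apply_zero h0]⟩
  have hmem : (f 0)⁻¹ • f ∈ closure (convexHull ℝ
      (range fun (t : ι → unitInterval) (p : ι → ℝ≥0) => ∏ i, (t i : ℝ) ^ (p i : ℝ))) := by
    refine closure_mono (convexHull_mono fun g hg => ?_)
      ((closure_convexHull_extremePoints isCompact_completelyMonotoneBase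
        convex_completelyMonotoneBase).ge (inv_smul_mem_completelyMonotoneBase hf h0))
    obtain ⟨t, ht⟩ := exists_prod_rpow_eq_of_mem_extremePoints hg
    exact ⟨t, (funext ht).symm⟩
  obtain ⟨μ, hμ⟩ := exists_probabilityMeasure_of_mem_closure_convexHull
    (continuous_pi continuous_prod_rpow) hmem
  refine ⟨ENNReal.ofReal (f 0) • μ, Measure.smul_finite _ ENNReal.ofReal_ne_top, fun p => ?_⟩
  rw [integral_smul_measure, ENNReal.toReal_ofReal (hf.nonneg 0), ← hμ p]
  exact (mul_inv_cancel_left₀ h0 _).symm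

lemma ae_apply_ne_zero_of_continuousAt_zero {μ : Measure (ι → unitInterval)} [IsFiniteMeasure μ]
    {f : (ι → ℝ≥0) → ℝ} (hf : ContinuousAt f 0)
    (hμ : ∀ p, f p = ∫ t, ∏ i, (t i : ℝ) ^ (p i : ℝ) ∂μ) (i : ι) :
    ∀ᵐ t ∂μ, t i ≠ 0 := by
  classical
  have hf0 : f 0 = μ.real univ := by simp [hμ]
  have hfs (s : ℝ≥0) : f (Pi.single i s) = ∫ t, (t i : ℝ) ^ (s : ℝ) ∂μ := by
    rw [hμ]
    congr! with t
    rw [Fintype.prod_eq_single i fun j hj => by simp [hj], Pi.single_eq_same]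
  have hlim : Tendsto (fun s => f 0 - f (Pi.single i s)) (𝓝[>] 0) (𝓝 (f 0 - f 0)) := by
    refine tendsto_const_nhds.sub (hf.tendsto.comp ?_)
    simpa using ((continuous_single (A := fun _ : ι => ℝ≥0) i).tendsto 0).mono_left
      nhdsWithin_le_nhds
  have hle : ∀ᶠ s : ℝ≥0 in 𝓝[>] 0, μ.real {t | t i = 0} ≤ f 0 - f (Pi.single i s) := by
    filter_upwards [self_mem_nhdsWithin] with s hs
    rw [hf0, hfs]
    exact measureReal_apply_eq_zero_le μ i (NNReal.coe_pos.2 hs)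
  have hzero : μ.real {t | t i = 0} = 0 :=
    le_antisymm ((ge_of_tendsto hlim hle).trans_eq (sub_self _)) measureReal_nonneg
  rw [ae_iff]
  simpa [measureReal_eq_zero_iff] using hzero

lemma prod_rpow_eq_exp_neg_sum {t : ι → unitInterval} (ht : ∀ i, t i ≠ 0) (p : ι → ℝ≥0) :
    ∏ i, (t i : ℝ) ^ (p i : ℝ) = exp (-∑ i, (p i : ℝ) * -log (t i)) := by
  rw [← Finset.sum_neg_distrib, exp_sum]
  refine Finset.prod_congr rfl fun i _ => ?_
  rw [rpow_def_of_pos (unitInterval.pos_iff_ne_zero.2 (ht i)), mul_neg, neg_neg, mul_comm]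

lemma IsCompletelyMonotone.exists_measure_orthant {f : (ι → ℝ≥0) → ℝ}
    (hf : IsCompletelyMonotone f) (hcont : ContinuousAt f 0) :
    ∃ μ : Measure (ι → ℝ), IsFiniteMeasure μ ∧ μ {x | ¬ ∀ i, 0 ≤ x i} = 0 ∧
      ∀ p, f p = ∫ x, exp (-∑ i, (p i : ℝ) * x i) ∂μ := by
  obtain ⟨μ, hfin, hμ⟩ := hf.exists_measure_cube
  let L : (ι → unitInterval) → ι → ℝ := fun t i => -log (t i)
  have hL : Measurable L := by fun_prop
  refine ⟨μ.map L, Measure.isFiniteMeasure_map μ L, ?_, fun p => ?_⟩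
  · exact (ae_map_iff hL.aemeasurable measurableSet_Ici).2 <|
      ae_of_all _ fun t i => neg_nonneg.2 (log_nonpos (t i).2.1 (t i).2.2)
  · rw [hμ, integral_map hL.aemeasurable (Measurable.aestronglyMeasurable (by fun_prop))]
    refine integral_congr_ae ?_
    filter_upwards [ae_all_iff.2 (ae_apply_ne_zero_of_continuousAt_zero hcont hμ)] with t ht
    exact prod_rpow_eq_exp_neg_sum ht p

end Cube

section OrthantTransfer

variable {ι : Type*}

lemma map_coe_map_toNNReal {μ : Measure (ι → ℝ)} (hμ : μ {x | ¬ ∀ i, 0 ≤ x i} = 0) :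
    (μ.map fun x i => (x i).toNNReal).map (fun (x : ι → ℝ≥0) i => (x i : ℝ)) = μ := by
  rw [Measure.map_map (by fun_prop) (by fun_prop)]
  have hid : (fun (x : ι → ℝ≥0) i => (x i : ℝ)) ∘ (fun x i => (x i).toNNReal) =ᵐ[μ] id := by
    filter_upwards [mem_ae_iff.2 hμ] with x hx
    exact funext fun i => coe_toNNReal _ (hx i)
  rw [Measure.map_congr hid, Measure.map_id]

lemma integral_map_toNNReal {μ : Measure (ι → ℝ)} (hμ : μ {x | ¬ ∀ i, 0 ≤ x i} = 0)
    {g : (ι → ℝ) → ℝ} (hg : Measurable g) :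
    ∫ y : ι → ℝ≥0, g (fun i => y i) ∂(μ.map fun x i => (x i).toNNReal) = ∫ x, g x ∂μ := by
  conv_rhs => rw [← map_coe_map_toNNReal hμ]
  exact (integral_map (Measurable.aemeasurable (by fun_prop)) hg.aestronglyMeasurable).symm

end OrthantTransfer

lemma ext_of_integral_eq_of_mem_submonoid {X : Type*} [TopologicalSpace X] [PolishSpace X]
    [MeasurableSpace X] [BorelSpace X] {μ ν : Measure X} [IsFiniteMeasure μ] [IsFiniteMeasure ν]
    (S : Submonoid (X →ᵇ ℝ)) (hsep : ((⇑) '' (S : Set (X →ᵇ ℝ))).SeparatesPoints)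
    (h : ∀ g ∈ S, ∫ x, g x ∂μ = ∫ x, g x ∂ν) : μ = ν := by
  let A : StarSubalgebra ℝ (X →ᵇ ℝ) :=
    { Algebra.adjoin ℝ (S : Set (X →ᵇ ℝ)) with
      star_mem' := fun {f} hf => by rwa [show star f = f by ext; simp] }
  have hspan (g : X →ᵇ ℝ) (hg : g ∈ Submodule.span ℝ (S : Set (X →ᵇ ℝ))) :
      ∫ x, g x ∂μ = ∫ x, g x ∂ν := by
    induction hg using Submodule.span_induction with
    | mem g hg => exact h g hg
    | zero => simp
    | add g₁ g₂ _ _ h₁ h₂ =>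
      simp only [BoundedContinuousFunction.add_apply]
      rw [integral_add (g₁.integrable μ) (g₂.integrable μ), h₁, h₂,
        integral_add (g₁.integrable ν) (g₂.integrable ν)]
    | smul c g _ hg =>
      simp only [BoundedContinuousFunction.coe_smul, integral_smul, hg]
  refine ext_of_forall_mem_subalgebra_integral_eq_of_polish (A := A) ?_ fun g hg => hspan g ?_
  · intro x y hxy
    obtain ⟨_, ⟨g, hg, rfl⟩, hne⟩ := hsep hxy
    exact ⟨g, ⟨g.toContinuousMap, ⟨g, Algebra.subset_adjoin hg, rfl⟩, rfl⟩, hne⟩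
  · rw [← S.closure_eq, ← Algebra.adjoin_eq_span]
    exact hg

section Uniqueness

variable {ι : Type*} [Fintype ι]

/-- The functions `x ↦ exp (-p · x)` on the closed orthant, as a monoid homomorphism in `p`. -/
noncomputable def expNegDot (ι : Type*) [Fintype ι] :
    Multiplicative (ι → ℝ≥0) →* ((ι → ℝ≥0) →ᵇ ℝ) where
  toFun p := .ofNormedAddCommGroup (fun x => exp (-∑ i, (p.toAdd i : ℝ) * x i)) (by fun_prop) 1
    fun x => by
      rw [norm_of_nonneg (exp_nonneg _), exp_le_one_iff, neg_nonpos]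
      positivity
  map_one' := by ext; simp
  map_mul' p q := by
    ext x
    simp only [toAdd_mul, Pi.add_apply, NNReal.coe_add, add_mul, Finset.sum_add_distrib, neg_add,
      exp_add, BoundedContinuousFunction.coe_ofNormedAddCommGroup,
      BoundedContinuousFunction.mul_apply]

lemma expNegDot_apply (p x : ι → ℝ≥0) :
    expNegDot ι (.ofAdd p) x = exp (-∑ i, (p i : ℝ) * x i) := rfl

lemma separatesPoints_range_expNegDot :
    ((⇑) '' (MonoidHom.mrange (expNegDot ι) : Set ((ι → ℝ≥0) →ᵇ ℝ))).SeparatesPoints := by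
  classical
  intro x y hxy
  obtain ⟨i, hi⟩ := Function.ne_iff.1 hxy
  refine ⟨_, ⟨_, ⟨.ofAdd (Pi.single i 1), rfl⟩, rfl⟩, ?_⟩
  have hdot (z : ι → ℝ≥0) : ∑ j, ((Pi.single i 1 : ι → ℝ≥0) j : ℝ) * z j = z i := by
    rw [Fintype.sum_eq_single i fun j hj => by simp [hj]]
    simp
  simpa only [expNegDot_apply, hdot, ne_eq, exp_eq_exp, neg_inj, NNReal.coe_inj] using hi

lemma ext_of_integral_exp_neg_eq {μ ν : Measure (ι → ℝ≥0)} [IsFiniteMeasure μ]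
    [IsFiniteMeasure ν] (h : ∀ p : ι → ℝ≥0,
      ∫ x, exp (-∑ i, (p i : ℝ) * x i) ∂μ = ∫ x, exp (-∑ i, (p i : ℝ) * x i) ∂ν) :
    μ = ν := by
  refine ext_of_integral_eq_of_mem_submonoid _ separatesPoints_range_expNegDot ?_
  rintro _ ⟨p, rfl⟩
  exact h p.toAdd

lemma ext_of_integral_exp_neg_eq_of_orthant {μ ν : Measure (ι → ℝ)} [IsFiniteMeasure μ]
    [IsFiniteMeasure ν] (hμ : μ {x | ¬ ∀ i, 0 ≤ x i} = 0) (hν : ν {x | ¬ ∀ i, 0 ≤ x i} = 0)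
    (h : ∀ p : ι → ℝ≥0,
      ∫ x, exp (-∑ i, (p i : ℝ) * x i) ∂μ = ∫ x, exp (-∑ i, (p i : ℝ) * x i) ∂ν) :
    μ = ν := by
  have hexp (p : ι → ℝ≥0) : Measurable fun x : ι → ℝ => exp (-∑ i, (p i : ℝ) * x i) := by
    fun_prop
  rw [← map_coe_map_toNNReal hμ, ← map_coe_map_toNNReal hν]
  refine congrArg _ (ext_of_integral_exp_neg_eq fun p => ?_)
  exact (integral_map_toNNReal hμ (hexp p)).trans
    ((h p).trans (integral_map_toNNReal hν (hexp p)).symm)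

end Uniqueness

section Derivatives

lemma hasFDerivAt_fwdDiff {𝕜 E F : Type*} [NontriviallyNormedField 𝕜] [NormedAddCommGroup E]
    [NormedSpace 𝕜 E] [NormedAddCommGroup F] [NormedSpace 𝕜 F] {G : E → F} {G' : E → E →L[𝕜] F}
    {h p : E} (hp : HasFDerivAt G (G' p) p) (hph : HasFDerivAt G (G' (p + h)) (p + h)) :
    HasFDerivAt (Δ_[h] G) (Δ_[h] G' p) p :=
  ((hasFDerivAt_comp_add_right h).2 hph).sub hp

variable {n : ℕ}

lemma isOpen_openOrthant : IsOpen {p : Fin n → ℝ | ∀ i, 0 < p i} := by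
  simp only [ofPred_forall]
  exact isOpen_iInter_of_finite fun i => isOpen_lt continuous_const (continuous_apply i)

lemma convex_openOrthant : Convex ℝ {p : Fin n → ℝ | ∀ i, 0 < p i} := by
  simp only [ofPred_forall]
  exact convex_iInter fun i => (convex_Ioi 0).linear_preimage (LinearMap.proj i)

lemma contDiffOn_foldr_pderiv' {G : (Fin n → ℝ) → ℝ}
    (hG : ContDiffOn ℝ (⊤ : ℕ∞) G {p : Fin n → ℝ | ∀ i, 0 < p i}) (l : List (Fin n)) :
    ContDiffOn ℝ (⊤ : ℕ∞) (l.foldr (pderiv' n) G) {p : Fin n → ℝ | ∀ i, 0 < p i} := by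
  induction l with
  | nil => exact hG
  | cons i l ih =>
    exact (ih.fderiv_of_isOpen isOpen_openOrthant (by simp)).clm_apply contDiffOn_const

lemma fderiv_apply_eq_sum_pderiv' (G : (Fin n → ℝ) → ℝ) (p h : Fin n → ℝ) :
    fderiv ℝ G p h = ∑ i, h i * pderiv' n i G p := by
  conv_lhs => rw [← Finset.univ_sum_single h, map_sum]
  refine Finset.sum_congr rfl fun i _ => ?_
  rw [pderiv', ← smul_eq_mul, ← map_smul, ← Pi.single_smul, smul_eq_mul, mul_one]

lemma exists_fwdDiff_eq_sum_pderiv' {G : (Fin n → ℝ) → ℝ}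
    (hG : ∀ p : Fin n → ℝ, (∀ i, 0 < p i) → DifferentiableAt ℝ G p) {h : Fin n → ℝ}
    (hh : 0 ≤ h) {p : Fin n → ℝ} (hp : ∀ i, 0 < p i) :
    ∃ z : Fin n → ℝ, (∀ i, 0 < z i) ∧ Δ_[h] G p = ∑ i, h i * pderiv' n i G z := by
  have hph (i : Fin n) : 0 < (p + h) i := add_pos_of_pos_of_nonneg (hp i) (hh i)
  obtain ⟨z, hz, heq⟩ := domain_mvt (fun q hq => (hG q hq).hasFDerivAt.hasFDerivWithinAt)
    convex_openOrthant hp hph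
  refine ⟨z, convex_openOrthant.segment_subset hp hph hz, ?_⟩
  rw [← fderiv_apply_eq_sum_pderiv', fwdDiff, heq, add_sub_cancel_left]

lemma hasFDerivAt_foldr_fwdDiff {G : (Fin n → ℝ) → ℝ}
    (hG : ∀ p : Fin n → ℝ, (∀ i, 0 < p i) → DifferentiableAt ℝ G p) {k : List (Fin n → ℝ)}
    (hk : ∀ h ∈ k, 0 ≤ h) {p : Fin n → ℝ} (hp : ∀ i, 0 < p i) :
    HasFDerivAt (k.foldr fwdDiff G) (k.foldr fwdDiff (fderiv ℝ G) p) p := by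
  induction k generalizing p with
  | nil => exact (hG p hp).hasFDerivAt
  | cons h k ih =>
    rw [List.forall_mem_cons] at hk
    exact hasFDerivAt_fwdDiff (ih hk.2 hp)
      (ih hk.2 fun i => add_pos_of_pos_of_nonneg (hp i) (hk.1 i))

lemma pderiv'_foldr_fwdDiff {G : (Fin n → ℝ) → ℝ}
    (hG : ∀ p : Fin n → ℝ, (∀ i, 0 < p i) → DifferentiableAt ℝ G p) {k : List (Fin n → ℝ)}
    (hk : ∀ h ∈ k, 0 ≤ h) (i : Fin n) {p : Fin n → ℝ} (hp : ∀ i, 0 < p i) :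
    pderiv' n i (k.foldr fwdDiff G) p = k.foldr fwdDiff (pderiv' n i G) p := by
  let eval : ((Fin n → ℝ) →L[ℝ] ℝ) →+ ℝ :=
    (ContinuousLinearMap.apply ℝ ℝ (Pi.single i 1 : Fin n → ℝ)).toLinearMap.toAddMonoidHom
  rw [pderiv', (hasFDerivAt_foldr_fwdDiff hG hk hp).fderiv]
  exact congrFun (foldr_fwdDiff_addMonoidHom_comp eval k (fderiv ℝ G)).symm p

variable {F : (Fin n → ℝ) → ℝ}

lemma foldr_fwdDiff_foldr_pderiv'_nonneg
    (hsmooth : ContDiffOn ℝ (⊤ : ℕ∞) F {p : Fin n → ℝ | ∀ i, 0 < p i})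
    (hcm : ∀ l : List (Fin n), ∀ p : Fin n → ℝ, (∀ i, 0 < p i) →
      0 ≤ (-1 : ℝ) ^ l.length * (l.foldr (pderiv' n) F) p)
    {k : List (Fin n → ℝ)} (hk : ∀ h ∈ k, 0 ≤ h) (l : List (Fin n)) {p : Fin n → ℝ}
    (hp : ∀ i, 0 < p i) :
    0 ≤ (-1) ^ (k.length + l.length) * k.foldr fwdDiff (l.foldr (pderiv' n) F) p := by
  induction k generalizing l p with
  | nil => simpa using hcm l p hp
  | cons h k ih =>
    rw [List.forall_mem_cons] at hk
    have hdiff (q : Fin n → ℝ) (hq : ∀ i, 0 < q i) :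
        DifferentiableAt ℝ (l.foldr (pderiv' n) F) q :=
      ((contDiffOn_foldr_pderiv' hsmooth l).contDiffAt
        (isOpen_openOrthant.mem_nhds hq)).differentiableAt (by simp)
    obtain ⟨z, hz, heq⟩ := exists_fwdDiff_eq_sum_pderiv'
      (fun q hq => (hasFDerivAt_foldr_fwdDiff hdiff hk.2 hq).differentiableAt) hk.1 hp
    rw [List.foldr_cons, heq, Finset.mul_sum]
    refine Finset.sum_nonneg fun i _ => ?_
    rw [pderiv'_foldr_fwdDiff hdiff hk.2 i hz, mul_left_comm]
    refine mul_nonneg (hk.1 i) ?_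
    simpa [add_assoc, add_comm 1] using ih hk.2 (i :: l) hz

lemma isCompletelyMonotone_comp_coe_add
    (hsmooth : ContDiffOn ℝ (⊤ : ℕ∞) F {p : Fin n → ℝ | ∀ i, 0 < p i})
    (hcm : ∀ l : List (Fin n), ∀ p : Fin n → ℝ, (∀ i, 0 < p i) →
      0 ≤ (-1 : ℝ) ^ l.length * (l.foldr (pderiv' n) F) p)
    {v : Fin n → ℝ} (hv : ∀ i, 0 < v i) :
    IsCompletelyMonotone fun q : Fin n → ℝ≥0 => F ((fun i => (q i : ℝ)) + v) := fun l q => by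
  let coe : (Fin n → ℝ≥0) →+ (Fin n → ℝ) := NNReal.toRealHom.toAddMonoidHom.compLeft (Fin n)
  have hpos : ∀ i, 0 < (coe q + v) i := fun i => add_pos_of_nonneg_of_pos (q i).2 (hv i)
  have hincr : ∀ h ∈ l.map coe, 0 ≤ h := by
    rw [List.forall_mem_map]
    exact fun h _ i => (h i).2
  change 0 ≤ (-1) ^ l.length * l.foldr fwdDiff ((fun p => F (p + v)) ∘ coe) q
  rw [foldr_fwdDiff_comp_addMonoidHom, foldr_fwdDiff_comp_add]
  simpa using foldr_fwdDiff_foldr_pderiv'_nonneg hsmooth hcm hincr [] hpos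

lemma isCompletelyMonotone_comp_coe
    (hcont : ContinuousOn F {p : Fin n → ℝ | ∀ i, 0 ≤ p i})
    (hsmooth : ContDiffOn ℝ (⊤ : ℕ∞) F {p : Fin n → ℝ | ∀ i, 0 < p i})
    (hcm : ∀ l : List (Fin n), ∀ p : Fin n → ℝ, (∀ i, 0 < p i) →
      0 ≤ (-1 : ℝ) ^ l.length * (l.foldr (pderiv' n) F) p) :
    IsCompletelyMonotone fun q : Fin n → ℝ≥0 => F fun i => q i := by
  let shifted (ε : ℝ) (q : Fin n → ℝ≥0) : ℝ := F ((fun i => (q i : ℝ)) + fun _ => ε)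
  have hlim : Tendsto shifted (𝓝[>] 0) (𝓝 fun q => F fun i => q i) := by
    refine tendsto_pi_nhds.2 fun q =>
      (hcont _ fun i => (q i).2).tendsto.comp (tendsto_nhdsWithin_iff.2 ⟨?_, ?_⟩)
    · have : Continuous fun ε : ℝ => (fun i => (q i : ℝ)) + fun _ => ε := by fun_prop
      simpa [Pi.add_def] using (this.tendsto 0).mono_left nhdsWithin_le_nhds
    · filter_upwards [self_mem_nhdsWithin] with ε hε i
      exact add_nonneg (q i).2 (le_of_lt hε)
  refine isClosed_setOf_isCompletelyMonotone.mem_of_tendsto hlim ?_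
  filter_upwards [self_mem_nhdsWithin] with ε hε
  exact isCompletelyMonotone_comp_coe_add hsmooth hcm fun _ => hε

end Derivatives

theorem stmt19_general {ι : Type*} [Fintype ι] (F : (ι → ℝ) → ℝ)
    (hcont : ContinuousWithinAt F {p : ι → ℝ | ∀ i, 0 ≤ p i} 0)
    (hcm : IsCompletelyMonotone fun q : ι → ℝ≥0 => F fun i => q i) :
    ∃! μ : Measure (ι → ℝ),
      IsFiniteMeasure μ ∧ μ {x | ¬ ∀ i, 0 ≤ x i} = 0 ∧
      ∀ p : ι → ℝ, (∀ i, 0 ≤ p i) →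
        F p = ∫ x, Real.exp (-∑ i, p i * x i) ∂μ := by
  have hcoe : Continuous fun (q : ι → ℝ≥0) i => (q i : ℝ) := by fun_prop
  have hcont' : ContinuousAt (fun q : ι → ℝ≥0 => F fun i => q i) 0 :=
    hcont.tendsto.comp (tendsto_nhdsWithin_iff.2
      ⟨hcoe.tendsto 0, Eventually.of_forall fun q i => (q i).2⟩)
  obtain ⟨μ, hfin, hsupp, hμ⟩ := hcm.exists_measure_orthant hcont'
  refine ⟨μ, ⟨hfin, hsupp, fun p hp => hμ fun i => ⟨p i, hp i⟩⟩, ?_⟩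
  rintro ν ⟨hfinν, hsuppν, hν⟩
  exact ext_of_integral_exp_neg_eq_of_orthant hsuppν hsupp fun p =>
    (hν _ fun i => (p i).2).symm.trans (hμ p)

/-- Bernstein–Hilbert theorem: a bounded, completely monotone function on the positive
orthant is the Laplace transform of a unique finite nonnegative Borel measure supported
in the orthant. -/
theorem stmt19 (n : ℕ) (F : (Fin n → ℝ) → ℝ)
    (hbdd : ∃ C : ℝ, ∀ p : Fin n → ℝ, (∀ i, 0 ≤ p i) → |F p| ≤ C)
    (hcont : ContinuousOn F {p : Fin n → ℝ | ∀ i, 0 ≤ p i})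
    (hsmooth : ContDiffOn ℝ (⊤ : ℕ∞) F {p : Fin n → ℝ | ∀ i, 0 < p i})
    (hcm : ∀ l : List (Fin n), ∀ p : Fin n → ℝ, (∀ i, 0 < p i) →
      0 ≤ (-1 : ℝ) ^ l.length * (l.foldr (pderiv' n) F) p) :
    ∃! μ : Measure (Fin n → ℝ),
      IsFiniteMeasure μ ∧ μ {x | ¬ ∀ i, 0 ≤ x i} = 0 ∧
      ∀ p : Fin n → ℝ, (∀ i, 0 ≤ p i) →
        F p = ∫ x, Real.exp (-∑ i, p i * x i) ∂μ :=
  stmt19_general F (hcont 0 fun _ => le_rfl) (isCompletelyMonotone_comp_coe hcont hsmooth hcm)
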